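/- If F: A^Z → A^Z is a rapidly left expansive cellular automaton and x is a number-like configuration, then frac(F^t(x)) = frac(x) holds for only finitely many t ∈ N, where frac(y) = (y[j])_{j≥0}. -/

import Mathlib

/-- `F` is a cellular automaton: it is given by some `(m,n)` local rule. -/
def IsCA {A : Type*} (F : (ℤ → A) → ℤ → A) : Prop :=
  ∃ (m n : ℕ) (f : (Fin (m + n + 1) → A) → A),
    ∀ x i, F x i = f fun k => x (i - (m : ℤ) + (k.val : ℤ))

/-- `F` is left expansive with dimensions `(h, d, w)`: the contents of a translated
rectangle (spatial offsets `0,...,w-1`, time iterates `t - b` for `-d ≤ b ≤ h`) in any two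
space-time diagrams determine the symbol immediately to the left of the rectangle
(at time iterate `t`). -/
def LeftExpansive {A : Type*} (F : (ℤ → A) → ℤ → A) (h d w : ℕ) : Prop :=
  ∀ (x₁ x₂ : ℤ → A) (i₁ i₂ : ℤ) (t₁ t₂ : ℕ), h ≤ t₁ → h ≤ t₂ →
    (∀ (a : ℕ) (b : ℤ), a < w → -(d : ℤ) ≤ b → b ≤ (h : ℤ) →
      F^[((t₁ : ℤ) - b).toNat] x₁ (i₁ + (a : ℤ)) = F^[((t₂ : ℤ) - b).toNat] x₂ (i₂ + (a : ℤ))) →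
    F^[t₁] x₁ (i₁ - 1) = F^[t₂] x₂ (i₂ - 1)

/-- A one-sided sequence is eventually `p`-periodic for some `p ≥ 1`. -/
def EvPeriodicSeq {B : Type*} (y : ℕ → B) : Prop :=
  ∃ p : ℕ, 1 ≤ p ∧ ∃ c : ℕ, ∀ t, c ≤ t → y (t + p) = y t

/-- A configuration is number-like: nonzero, and zero at all sufficiently small coordinates. -/
def NumberLike {A : Type*} [Zero A] (x : ℤ → A) : Prop :=
  (∃ i, x i ≠ 0) ∧ ∃ N : ℤ, ∀ i < N, x i = 0

/-- The left edge of a configuration: the least coordinate with a nonzero symbol. -/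
noncomputable def lbound {A : Type*} [Zero A] (x : ℤ → A) : ℤ :=
  sInf {N : ℤ | x N ≠ 0}

/-- `F` is left spreading on number-like configurations. -/
def LeftSpreading {A : Type*} [Zero A] (F : (ℤ → A) → ℤ → A) : Prop :=
  F (fun _ => 0) = (fun _ => 0) ∧
    ∀ x, NumberLike x → ∃ t : ℕ, 1 ≤ t ∧ lbound (F^[t] x) < lbound x

/-- The spreading speed of `F`:
`sup` over number-like `x` of `limsup_t (-lbound(F^t(x)))/t`. -/
noncomputable def spreadingSpeed {A : Type*} [Zero A] (F : (ℤ → A) → ℤ → A) : ℝ :=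
  ⨆ x : {x : ℤ → A // NumberLike x},
    Filter.limsup (fun t : ℕ => -((lbound (F^[t] x.1) : ℝ)) / (t : ℝ)) Filter.atTop

/-- `F` is rapidly left expansive with width `w`: left expansive with dimensions `(h,d,w)`,
left spreading with spreading speed `s`, and `s < 1/h` (equivalently `s * h < 1`,
which also covers the case `h = 0`). -/
def RapidlyLeftExpansive {A : Type*} [Zero A] (F : (ℤ → A) → ℤ → A) (w : ℕ) : Prop :=
  ∃ h d : ℕ, LeftExpansive F h d w ∧ LeftSpreading F ∧ spreadingSpeed F * (h : ℝ) < 1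

/-!
Suppose `F^t(x)` agrees with `x` on `[0, ∞)` for infinitely many `t`, let `p > 0` be one of these
times, and follow the discrepancies between the orbits of `x` and `y = F^p(x)` in space-time. They
are present at every time because a number-like configuration cannot be periodic. If the local rule
looks `m` cells to the left, they lie to the left of `m t` at time `t`, and shortly after each
return time `T` they lie to the left of a bound that does not depend on `T`.

By left expansivity with dimensions `(h, d, w)`, a discrepancy `(t, i)` with `t ≥ h` forces another
one further right, at most `h` steps earlier and at most `d` steps later, so that `t + h i` does not
decrease. Since left edges move slower than `1 / h`, this potential is arbitrarily large at a late
discrepancy. The chain of discrepancies starting there drifts right without getting past a later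
return time, so it has to descend to a time `t < h`. But there `i < m t` bounds the potential, a
contradiction.
-/

section

open Filter Set Function

variable {A : Type*} {F : (ℤ → A) → ℤ → A} {x y : ℤ → A}

/-- `F x i` depends only on the symbols of `x` in the window `[i - m, i + n]`. Unlike for a cellular
automaton, this dependence may vary with `i`. -/
def HasNeighborhood (F : (ℤ → A) → ℤ → A) (m n : ℕ) : Prop :=
  ∀ ⦃x y : ℤ → A⦄ ⦃i : ℤ⦄, EqOn x y (Icc (i - m) (i + n)) → F x i = F y i

theorem IsCA.exists_hasNeighborhood (hF : IsCA F) : ∃ m n : ℕ, HasNeighborhood F m n := by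
  obtain ⟨m, n, f, hf⟩ := hF
  refine ⟨m, n, fun x y i hxy => ?_⟩
  rw [hf, hf]
  congr 1
  funext k
  exact hxy ⟨by omega, by omega⟩

theorem IsCA.map_translate (hF : IsCA F) (x : ℤ → A) (c i : ℤ) :
    F (fun j => x (j + c)) i = F x (i + c) := by
  obtain ⟨m, n, f, hf⟩ := hF
  rw [hf, hf]
  congr 1
  funext k
  congr 1
  ring

namespace HasNeighborhood

variable {m n : ℕ} {R : ℤ}

theorem eqOn_Ici_iterate (hN : HasNeighborhood F m n) (hxy : EqOn x y (Ici R)) (t : ℕ) :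
    EqOn (F^[t] x) (F^[t] y) (Ici (R + m * t)) := by
  induction t with
  | zero => simpa using hxy
  | succ t ih =>
    intro i hi
    rw [iterate_succ_apply', iterate_succ_apply']
    refine hN fun j hj => ih ?_
    simp only [mem_Ici, mem_Icc] at hi hj ⊢
    push_cast at hi
    linarith

theorem eqOn_Iio_iterate (hN : HasNeighborhood F m n) (hxy : EqOn x y (Iio R)) (t : ℕ) :
    EqOn (F^[t] x) (F^[t] y) (Iio (R - n * t)) := by
  induction t with
  | zero => simpa using hxy
  | succ t ih =>
    intro i hi
    rw [iterate_succ_apply', iterate_succ_apply']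
    refine hN fun j hj => ih ?_
    simp only [mem_Iio, mem_Icc] at hi hj ⊢
    push_cast at hi
    linarith

end HasNeighborhood

section NumberLike

variable [Zero A]

theorem NumberLike.isLeast_lbound (hx : NumberLike x) : IsLeast {i | x i ≠ 0} (lbound x) := by
  obtain ⟨hne, N, hN⟩ := hx
  have hbdd : BddBelow {i | x i ≠ 0} := ⟨N, fun i hi => not_lt.1 fun hlt => hi (hN i hlt)⟩
  exact ⟨Int.csInf_mem hne hbdd, fun i hi => csInf_le hbdd hi⟩

theorem NumberLike.eqOn_zero_Iio_lbound (hx : NumberLike x) : EqOn x 0 (Iio (lbound x)) :=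
  fun _ hi => not_not.1 fun hne => (hx.isLeast_lbound.2 hne).not_gt hi

theorem lbound_zero : lbound (0 : ℤ → A) = 0 := by
  simp [lbound]

end NumberLike

namespace LeftSpreading

variable [Zero A]

theorem iterate_zero_eq (hs : LeftSpreading F) (t : ℕ) : F^[t] 0 = 0 :=
  iterate_fixed hs.1 t

-- As `lbound 0 = 0`, left spreading excludes `F x = 0` only when `lbound x ≤ 0`, whence the
-- translation.
theorem map_ne_zero (hs : LeftSpreading F) (hF : IsCA F) (hx : NumberLike x) : F x ≠ 0 := by
  intro hFx
  set y : ℤ → A := fun j => x (j + lbound x) with hy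
  have hy0 : y 0 ≠ 0 := by simpa [hy] using hx.isLeast_lbound.1
  have hyN : NumberLike y :=
    ⟨⟨0, hy0⟩, 0, fun i hi => hx.eqOn_zero_Iio_lbound (show i + lbound x < lbound x by omega)⟩
  have hFy : F y = 0 := funext fun i => by rw [hy, hF.map_translate, hFx]; rfl
  obtain ⟨t, ht, hlt⟩ := hs.2 y hyN
  obtain ⟨u, rfl⟩ := Nat.exists_eq_add_of_le' ht
  rw [iterate_succ_apply, hFy, hs.iterate_zero_eq, lbound_zero] at hlt
  exact (hyN.isLeast_lbound.2 hy0).not_gt hlt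

theorem numberLike_map (hs : LeftSpreading F) (hF : IsCA F) (hx : NumberLike x) :
    NumberLike (F x) := by
  obtain ⟨m, n, hN⟩ := hF.exists_hasNeighborhood
  refine ⟨ne_iff.1 (hs.map_ne_zero hF hx), lbound x - n * (1 : ℕ), fun i hi => ?_⟩
  have hvanish := hN.eqOn_Iio_iterate hx.eqOn_zero_Iio_lbound 1 hi
  rwa [hs.iterate_zero_eq] at hvanish

theorem numberLike_iterate (hs : LeftSpreading F) (hF : IsCA F) (hx : NumberLike x) (t : ℕ) :
    NumberLike (F^[t] x) :=
  Iterate.rec NumberLike hx (fun _ => hs.numberLike_map hF) t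

theorem not_isPeriodicPt (hs : LeftSpreading F) (hF : IsCA F) (hx : NumberLike x) {p : ℕ}
    (hp : 0 < p) : ¬ IsPeriodicPt F p x := by
  intro hper
  obtain ⟨j, -, hmin⟩ := Finset.exists_min_image (Finset.range p) (fun j => lbound (F^[j] x))
    ⟨0, Finset.mem_range.2 hp⟩
  obtain ⟨u, -, hlt⟩ := hs.2 _ (hs.numberLike_iterate hF hx j)
  have hle := hmin ((u + j) % p) (Finset.mem_range.2 (Nat.mod_lt _ hp))
  rw [hper.iterate_mod_apply, iterate_add_apply] at hle
  exact hle.not_gt hlt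

theorem frequently_lbound_iterate_le (hs : LeftSpreading F) (hF : IsCA F) (hx : NumberLike x) :
    ∃ᶠ t in atTop, lbound (F^[t] x) ≤ lbound x := by
  rw [frequently_atTop]
  intro T
  induction T with
  | zero => exact ⟨0, le_rfl, le_rfl⟩
  | succ T ih =>
    obtain ⟨t, ht, hle⟩ := ih
    obtain ⟨u, hu, hlt⟩ := hs.2 _ (hs.numberLike_iterate hF hx t)
    rw [← iterate_add_apply] at hlt
    exact ⟨u + t, by omega, by omega⟩

theorem lbound_sub_le_lbound_iterate (hs : LeftSpreading F) (hF : IsCA F) {m n : ℕ}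
    (hN : HasNeighborhood F m n) (hx : NumberLike x) (t : ℕ) :
    lbound x - n * t ≤ lbound (F^[t] x) := by
  by_contra! hlt
  have hvanish := hN.eqOn_Iio_iterate hx.eqOn_zero_Iio_lbound t hlt
  rw [hs.iterate_zero_eq] at hvanish
  exact (hs.numberLike_iterate hF hx t).isLeast_lbound.1 hvanish

end LeftSpreading

section SpreadingSpeed

variable [Zero A]

/-- The average speed at which the left edge of `x` moves left during the first `t` steps, up to a
term `lbound x / t`. The spreading speed is the supremum of its upper limits; the value at `t = 0`
is `0` by the convention on division. -/
noncomputable def edgeSpeed (F : (ℤ → A) → ℤ → A) (x : ℤ → A) (t : ℕ) : ℝ :=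
  -(lbound (F^[t] x) : ℝ) / t

namespace LeftSpreading

theorem eventually_edgeSpeed_le (hs : LeftSpreading F) (hF : IsCA F) {m n : ℕ}
    (hN : HasNeighborhood F m n) (hx : NumberLike x) :
    ∀ᶠ t in atTop, edgeSpeed F x t ≤ n + 1 := by
  filter_upwards [eventually_ge_atTop (lbound x).natAbs, eventually_gt_atTop 0] with t ht ht0
  rw [edgeSpeed, div_le_iff₀ (by exact_mod_cast ht0)]
  have hspread := hs.lbound_sub_le_lbound_iterate hF hN hx t
  have hedge : -lbound (F^[t] x) ≤ (n + 1) * t := by linarith [show -lbound x ≤ t by omega]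
  exact_mod_cast hedge

theorem frequently_le_edgeSpeed (hs : LeftSpreading F) (hF : IsCA F) (hx : NumberLike x) :
    ∃ᶠ t in atTop, -|(lbound x : ℝ)| ≤ edgeSpeed F x t := by
  refine ((hs.frequently_lbound_iterate_le hF hx).and_eventually (eventually_ge_atTop 1)).mono ?_
  rintro t ⟨hle, ht⟩
  have ht1 : (1 : ℝ) ≤ t := by exact_mod_cast ht
  have hleR : (lbound (F^[t] x) : ℝ) ≤ lbound x := by exact_mod_cast hle
  rw [edgeSpeed, le_div_iff₀ (by linarith)]
  nlinarith [le_abs_self (lbound x : ℝ), abs_nonneg (lbound x : ℝ)]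

theorem limsup_edgeSpeed_le_spreadingSpeed (hs : LeftSpreading F) (hF : IsCA F)
    (hx : NumberLike x) : limsup (edgeSpeed F x) atTop ≤ spreadingSpeed F := by
  obtain ⟨m, n, hN⟩ := hF.exists_hasNeighborhood
  refine le_ciSup (f := fun z : {z : ℤ → A // NumberLike z} => limsup (edgeSpeed F z.1) atTop)
    ⟨n + 1, ?_⟩ ⟨x, hx⟩
  rintro _ ⟨⟨z, hz⟩, rfl⟩
  exact limsup_le_of_le (IsCoboundedUnder.of_frequently_ge (hs.frequently_le_edgeSpeed hF hz))
    (hs.eventually_edgeSpeed_le hF hN hz)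

theorem eventually_edgeSpeed_lt (hs : LeftSpreading F) (hF : IsCA F) (hx : NumberLike x) {r : ℝ}
    (hr : spreadingSpeed F < r) : ∀ᶠ t in atTop, edgeSpeed F x t < r := by
  obtain ⟨m, n, hN⟩ := hF.exists_hasNeighborhood
  exact eventually_lt_of_limsup_lt ((hs.limsup_edgeSpeed_le_spreadingSpeed hF hx).trans_lt hr)
    ⟨n + 1, hs.eventually_edgeSpeed_le hF hN hx⟩

theorem tendsto_add_mul_lbound_iterate_atTop (hs : LeftSpreading F) (hF : IsCA F)
    (hx : NumberLike x) {b : ℝ} (hb : 0 ≤ b) (hspeed : spreadingSpeed F * b < 1) :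
    Tendsto (fun t : ℕ => t + b * lbound (F^[t] x)) atTop atTop := by
  obtain ⟨r, hsr, hrb⟩ : ∃ r > spreadingSpeed F, r * b < 1 :=
    ((continuous_mul_const b).continuousAt.eventually_lt_const hspeed).exists_gt
  have hlinear : Tendsto (fun t : ℕ => (1 - r * b) * t) atTop atTop :=
    tendsto_natCast_atTop_atTop.const_mul_atTop (sub_pos.2 hrb)
  refine tendsto_atTop_mono' _ ?_ hlinear
  filter_upwards [hs.eventually_edgeSpeed_lt hF hx hsr, eventually_gt_atTop 0] with t hlt ht0
  rw [edgeSpeed, div_lt_iff₀ (by exact_mod_cast ht0)] at hlt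
  linarith [mul_le_mul_of_nonneg_left hlt.le hb]

end LeftSpreading

end SpreadingSpeed

/-- The cells at which the orbits of `x` and `y` under `F` differ at time `t`. -/
def discrepancy (F : (ℤ → A) → ℤ → A) (x y : ℤ → A) (t : ℕ) : Set ℤ :=
  {i | F^[t] x i ≠ F^[t] y i}

theorem discrepancy_nonempty {t : ℕ} (hne : F^[t] x ≠ F^[t] y) : (discrepancy F x y t).Nonempty :=
  ne_iff.1 hne

theorem lt_of_mem_discrepancy {s t : ℕ} {i R : ℤ} {m n : ℕ} (hN : HasNeighborhood F m n)
    (hxy : EqOn (F^[s] x) (F^[s] y) (Ici R)) (hi : i ∈ discrepancy F x y (t + s)) :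
    i < R + m * t := by
  by_contra! hle
  refine hi ?_
  rw [iterate_add_apply, iterate_add_apply]
  exact hN.eqOn_Ici_iterate hxy t hle

theorem lbound_le_or_lbound_le_of_mem_discrepancy [Zero A] {t : ℕ} {i : ℤ}
    (hx : NumberLike (F^[t] x)) (hy : NumberLike (F^[t] y)) (hi : i ∈ discrepancy F x y t) :
    lbound (F^[t] x) ≤ i ∨ lbound (F^[t] y) ≤ i := by
  by_contra! hlt
  exact hi ((hx.eqOn_zero_Iio_lbound hlt.1).trans (hy.eqOn_zero_Iio_lbound hlt.2).symm)

/-- For a space-time set with time slices `D t`: every point at time at least `h` is followed by a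
point strictly to its right, at most `h` steps earlier and at most `d` steps later. This is what
left expansivity says about discrepancies. -/
def ProlongsRight (D : ℕ → Set ℤ) (h d : ℕ) : Prop :=
  ∀ ⦃t i⦄, h ≤ t → i ∈ D t → ∃ t', t ≤ t' + h ∧ t' ≤ t + d ∧ ∃ i' ∈ D t', i < i'

theorem LeftExpansive.prolongsRight_discrepancy {h d w : ℕ} (hexp : LeftExpansive F h d w)
    (x y : ℤ → A) : ProlongsRight (discrepancy F x y) h d := by
  intro t i ht hi
  by_contra! hno
  have heq := hexp x y (i + 1) (i + 1) t t ht ht fun a b _ hdb hbh =>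
    not_not.1 fun hne => (hno (t - b).toNat (by omega) (by omega) _ hne).not_gt (by omega)
  rw [add_sub_cancel_right] at heq
  exact hi heq

-- Along a chain of prolongations `t + h * i` does not decrease and `t - d * i` does not increase,
-- so the rightmost point before time `T` subject to these constraints cannot be prolonged.
theorem ProlongsRight.exists_lt_mem {D : ℕ → Set ℤ} {h d : ℕ} (hD : ProlongsRight D h d)
    {t₀ T : ℕ} {i₀ b : ℤ} (hi₀ : i₀ ∈ D t₀) (hbdd : ∀ t < T, BddAbove (D t))
    (hb : ∀ t ≤ d, ∀ i ∈ D (t + T), i ≤ b) (ht₀ : t₀ < T) (hT : t₀ + d * (b - i₀) < T) :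
    ∃ t < h, ∃ i ∈ D t, t₀ + h * i₀ ≤ t + h * i := by
  let S : Set ℤ :=
    {i | ∃ t < T, i ∈ D t ∧ (t₀ + h * i₀ ≤ t + h * i) ∧ t - d * i ≤ t₀ - d * i₀}
  have hS : S.Nonempty := ⟨i₀, t₀, ht₀, hi₀, le_rfl, le_rfl⟩
  have hSbdd : BddAbove S :=
    ((finite_Iio T).bddAbove_biUnion.2 hbdd).mono fun i ⟨t, htT, hi, _⟩ =>
      mem_biUnion (mem_Iio.2 htT) hi
  obtain ⟨t, htT, hi, hlow, hup⟩ := Int.csSup_mem hS hSbdd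
  refine ⟨t, ?_, _, hi, hlow⟩
  by_contra! hht
  obtain ⟨t', htt', ht't, i', hi', hlt⟩ := hD hht hi
  have hlow' : t₀ + h * i₀ ≤ t' + h * i' := by zify at htt'; nlinarith
  have hup' : t' - d * i' ≤ t₀ - d * i₀ := by zify at ht't; nlinarith
  have ht'T : t' < T := by
    by_contra! hTt'
    obtain ⟨u, rfl⟩ := Nat.exists_eq_add_of_le' hTt'
    have hi'b : i' ≤ b := hb u (by omega) i' hi'
    zify at hTt'
    nlinarith
  exact (le_csSup hSbdd ⟨t', ht'T, hi', hlow', hup'⟩).not_gt hlt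

theorem LeftSpreading.eventually_forall_mem_discrepancy_lt [Zero A] {h : ℕ}
    (hs : LeftSpreading F) (hF : IsCA F) (hspeed : spreadingSpeed F * h < 1)
    (hx : NumberLike x) (hy : NumberLike y) (C : ℤ) :
    ∀ᶠ t in atTop, ∀ i ∈ discrepancy F x y t, C < t + h * i := by
  have hedge {z : ℤ → A} (hz : NumberLike z) :
      ∀ᶠ t : ℕ in atTop, C < t + h * lbound (F^[t] z) := by
    filter_upwards [(hs.tendsto_add_mul_lbound_iterate_atTop hF hz h.cast_nonneg
      hspeed).eventually_gt_atTop (C : ℝ)] with t ht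
    exact_mod_cast ht
  filter_upwards [hedge hx, hedge hy] with t hCx hCy i hi
  rcases lbound_le_or_lbound_le_of_mem_discrepancy (hs.numberLike_iterate hF hx t)
    (hs.numberLike_iterate hF hy t) hi with hle | hle
  · exact hCx.trans_le (by gcongr)
  · exact hCy.trans_le (by gcongr)

theorem RapidlyLeftExpansive.finite_setOf_eqOn_Ici [Zero A] {w : ℕ}
    (hre : RapidlyLeftExpansive F w) (hF : IsCA F) (hx : NumberLike x) (hy : NumberLike y)
    (hne : ∀ t, F^[t] x ≠ F^[t] y) {R₀ : ℤ} (hxy : EqOn x y (Ici R₀)) (R : ℤ) :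
    {t | EqOn (F^[t] x) (F^[t] y) (Ici R)}.Finite := by
  obtain ⟨h, d, hexp, hs, hspeed⟩ := hre
  obtain ⟨m, n, hN⟩ := hF.exists_hasNeighborhood
  have hright : ∀ t, ∀ i ∈ discrepancy F x y t, i < R₀ + m * t := fun t i hi =>
    lt_of_mem_discrepancy (s := 0) hN hxy hi
  by_contra hinf
  obtain ⟨t₀, hlarge⟩ := (hs.eventually_forall_mem_discrepancy_lt hF hspeed hx hy
    (h + h * (R₀ + m * h))).exists
  obtain ⟨i₀, hi₀⟩ := discrepancy_nonempty (hne t₀)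
  obtain ⟨T, hTR, hT⟩ := Set.Infinite.exists_gt hinf (t₀ + d * (R + m * d - i₀).toNat)
  have hnear : ∀ t ≤ d, ∀ i ∈ discrepancy F x y (t + T), i ≤ R + m * d := fun t ht i hi =>
    (lt_of_mem_discrepancy hN hTR hi).le.trans (by gcongr)
  obtain ⟨t, hth, i, hi, hpot⟩ :=
    (hexp.prolongsRight_discrepancy x y).exists_lt_mem hi₀
      (fun t _ => ⟨R₀ + m * t, fun i hi => (hright t i hi).le⟩) hnear (by omega)
      (by zify at hT; nlinarith [Int.self_le_toNat (R + m * d - i₀)])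
  have hi_le : i ≤ R₀ + m * h := (hright t i hi).le.trans (by gcongr)
  have hpot_le : (t : ℤ) + h * i ≤ h + h * (R₀ + m * h) := by gcongr
  exact ((hlarge i₀ hi₀).trans_le hpot).not_ge hpot_le

theorem stmt_12_general [Zero A] (hF : IsCA F) {w : ℕ} (hre : RapidlyLeftExpansive F w)
    (hx : NumberLike x) : {t : ℕ | ∀ j : ℕ, F^[t] x (j : ℤ) = x (j : ℤ)}.Finite := by
  have ⟨_, _, _, hs, _⟩ := hre
  obtain ⟨m, n, hN⟩ := hF.exists_hasNeighborhood
  have hret : ∀ t, (∀ j : ℕ, F^[t] x (j : ℤ) = x (j : ℤ)) → EqOn (F^[t] x) x (Ici 0) := by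
    intro t ht i hi
    lift i to ℕ using hi
    exact ht i
  by_contra hinf
  obtain ⟨p, hpret, hp⟩ := Set.Infinite.exists_gt hinf 0
  have hcomm : ∀ t, F^[t] (F^[p] x) = F^[p] (F^[t] x) := fun t =>
    Commute.iterate_iterate_self F t p x
  have hne : ∀ t, F^[t] x ≠ F^[t] (F^[p] x) := fun t heq =>
    hs.not_isPeriodicPt hF (hs.numberLike_iterate hF hx t) hp ((hcomm t).symm.trans heq.symm)
  refine hinf ((hre.finite_setOf_eqOn_Ici hF hx (hs.numberLike_iterate hF hx p) hne
    (hret p hpret).symm (m * p)).subset fun t ht => ?_)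
  have hxp : EqOn (F^[t] x) (F^[p] x) (Ici 0) := (hret t ht).trans (hret p hpret).symm
  have hpt : EqOn (F^[p] (F^[t] x)) (F^[p] x) (Ici (m * p)) := by
    simpa only [zero_add] using hN.eqOn_Ici_iterate (hret t ht) p
  rw [mem_ofPred_eq, hcomm]
  exact (hxp.mono (Ici_subset_Ici.2 (by positivity))).trans hpt.symm

end

/-- If `F` is a rapidly left expansive CA and `x` is a number-like configuration, then
`frac(F^t(x)) = frac(x)` holds for only finitely many `t ∈ ℕ`. -/
theorem stmt_12 {A : Type*} [Zero A] [Fintype A] (F : (ℤ → A) → ℤ → A) (hF : IsCA F)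
    (w : ℕ) (hw : 1 ≤ w) (hre : RapidlyLeftExpansive F w)
    (x : ℤ → A) (hx : NumberLike x) :
    {t : ℕ | ∀ j : ℕ, F^[t] x (j : ℤ) = x (j : ℤ)}.Finite :=
  stmt_12_general hF hre hx
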